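/- For m ≥ n ≥ 4, B(P_n □ P_m) = 5, i.e., every n × m grid graph with both n, m ≥ 4 has bodyguard number 5. -/

import Mathlib

open SimpleGraph

/-- A token may stay in place or move along an edge. -/
def stepRel {V : Type*} (G : SimpleGraph V) (x y : V) : Prop := x = y ∨ G.Adj x y

/-- The sequence of positions in the pursuit game: `(gamePlay ...) n` is the pair
(pursuer positions, evader position) after `n` full rounds; at time `0` the pursuers
have been placed (`binit`) and then the evader placed (`pinit binit`). In each round,
the pursuers move first (via `bmove`, seeing the current state), then the evader moves
(via `pmove`, seeing the pursuers' new positions and his own position). -/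
def gamePlay {V : Type*} {k : ℕ} (binit : Fin k → V) (bmove : (Fin k → V) → V → Fin k → V)
    (pinit : (Fin k → V) → V) (pmove : (Fin k → V) → V → V) : ℕ → (Fin k → V) × V
  | 0 => (binit, pinit binit)
  | n + 1 =>
      let s := gamePlay binit bmove pinit pmove n
      (bmove s.1 s.2, pmove (bmove s.1 s.2) s.2)

/-- `k` bodyguards have a winning strategy on `G`: they can place themselves and move so
that, against every president strategy, after finitely many rounds they occupy the whole
open neighbourhood of the president's vertex at the end of every bodyguard turn. -/
def BodyguardsWin {V : Type*} (G : SimpleGraph V) (k : ℕ) : Prop :=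
  ∃ (binit : Fin k → V) (bmove : (Fin k → V) → V → Fin k → V),
    (∀ bs p i, stepRel G (bs i) (bmove bs p i)) ∧
    ∀ (pinit : (Fin k → V) → V) (pmove : (Fin k → V) → V → V),
      (∀ bs p, stepRel G p (pmove bs p)) →
      ∃ N, ∀ n, N ≤ n →
        ∀ v, G.Adj (gamePlay binit bmove pinit pmove n).2 v →
          ∃ i, (gamePlay binit bmove pinit pmove (n + 1)).1 i = v

/-- The bodyguard number of a finite graph. -/
noncomputable def bodyguardNumber {V : Type*} (G : SimpleGraph V) [Fintype V] : ℕ :=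
  sInf {k | BodyguardsWin G k}

/-- `k` cops have a winning strategy in classic Cops and Robber on `G`: at some point a cop
occupies the same vertex as the robber (either right after a cop move, or at the end of a
round). -/
def CopsWin {V : Type*} (G : SimpleGraph V) (k : ℕ) : Prop :=
  ∃ (cinit : Fin k → V) (cmove : (Fin k → V) → V → Fin k → V),
    (∀ cs r i, stepRel G (cs i) (cmove cs r i)) ∧
    ∀ (rinit : (Fin k → V) → V) (rmove : (Fin k → V) → V → V),
      (∀ cs r, stepRel G r (rmove cs r)) →
      ∃ n i, (gamePlay cinit cmove rinit rmove (n + 1)).1 i =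
                (gamePlay cinit cmove rinit rmove n).2 ∨
             (gamePlay cinit cmove rinit rmove n).1 i =
                (gamePlay cinit cmove rinit rmove n).2

/-- The cop number of a finite graph. -/
noncomputable def copNumber {V : Type*} (G : SimpleGraph V) [Fintype V] : ℕ :=
  sInf {k | CopsWin G k}

/-!
Upper bound: every neighbour of the president is one of his four translates by a unit step, clamped
to the grid. A clamped translate moves no faster than the president himself, so a bodyguard who has
caught it can follow it forever. Two cops catch a robber on the grid, so the four translates can be
caught one after the other by `3 + 2 = 5` bodyguards.

Lower bound: against at most four bodyguards the president stays at interior vertices that cannot be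
surrounded by the next move. While he is not surrounded at `p`, he has one within a step: let `q₁`,
`q₂` be interior neighbours of `p`, one in its row and one in its column. As interior vertices have
four neighbours, surrounding one of them uses every guard exactly once; if the guards could surround
each of `p`, `q₁` and `q₂` in one move, distances would force them to surround `p` already.
-/

section Strategies

variable {V : Type*} {k : ℕ} {G : SimpleGraph V}

lemma stepRel.refl (x : V) : stepRel G x x := Or.inl rfl

/-- The bodyguards at `bs` occupy the whole open neighbourhood of `p`. -/
def Surrounds (G : SimpleGraph V) (bs : Fin k → V) (p : V) : Prop :=
  ∀ v, G.Adj p v → ∃ i, bs i = v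

/-- A legal simultaneous move of the whole team from `bs` to `bs'`. -/
def TeamStep (G : SimpleGraph V) (bs bs' : Fin k → V) : Prop :=
  ∀ i, stepRel G (bs i) (bs' i)

/-- A set `S` of positions, with the team to move, that is a winning region for the bodyguards:
they can surround the president at once and be in `S` again after his reply. -/
def IsShield (G : SimpleGraph V) (S : (Fin k → V) → V → Prop) : Prop :=
  ∀ ⦃bs p⦄, S bs p → ∃ bs', TeamStep G bs bs' ∧ Surrounds G bs' p ∧ ∀ q, stepRel G p q → S bs' q

/-- `ForcesIn G S r bs p`: from the position `(bs, p)`, with the team to move, the team can force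
the play to reach `S` within `r` rounds. The same notion serves for bodyguards and for cops. -/
inductive ForcesIn (G : SimpleGraph V) (S : (Fin k → V) → V → Prop) :
    ℕ → (Fin k → V) → V → Prop
  | of_mem {r bs p} : S bs p → ForcesIn G S r bs p
  | move {r bs bs' p} : TeamStep G bs bs' → (∀ p', stepRel G p p' → ForcesIn G S r bs' p') →
      ForcesIn G S (r + 1) bs p

variable {S S' : (Fin k → V) → V → Prop} {r r' : ℕ} {bs : Fin k → V} {p : V}

lemma ForcesIn.mono (hr : r ≤ r') (h : ForcesIn G S r bs p) : ForcesIn G S r' bs p := by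
  induction h generalizing r' with
  | of_mem h => exact .of_mem h
  | move hstep _ ih =>
    cases r' with
    | zero => omega
    | succ r' => exact .move hstep fun p' hp => ih p' hp (Nat.le_of_succ_le_succ hr)

lemma ForcesIn.trans (h : ForcesIn G S r bs p)
    (hS : ∀ bs p, S bs p → ForcesIn G S' r' bs p) : ForcesIn G S' (r + r') bs p := by
  induction h with
  | of_mem h => exact (hS _ _ h).mono (Nat.le_add_left _ _)
  | @move r _ _ _ hstep _ ih => exact Nat.add_right_comm r 1 r' ▸ .move hstep ih

/-- A move that is optimal for the least possible number of rounds is optimal for every number. -/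
lemma exists_teamStep_forcesIn (hS : ¬ S bs p) :
    ∃ bs', TeamStep G bs bs' ∧
      ∀ r, ForcesIn G S (r + 1) bs p → ∀ p', stepRel G p p' → ForcesIn G S r bs' p' := by
  classical
  by_cases h : ∃ r, ForcesIn G S r bs p
  · obtain ⟨q, hq, hmin⟩ : ∃ q, ForcesIn G S q bs p ∧ ∀ r, ForcesIn G S r bs p → q ≤ r :=
      ⟨Nat.find h, Nat.find_spec h, fun _ => Nat.find_min' h⟩
    cases hq with
    | of_mem h => exact absurd h hS
    | move hstep hforce =>
      exact ⟨_, hstep, fun r hr p' hp => (hforce p' hp).mono (Nat.le_of_succ_le_succ (hmin _ hr))⟩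
  · exact ⟨bs, fun _ => .refl _, fun r hr => absurd ⟨_, hr⟩ h⟩

theorem bodyguardsWin_of_forcesIn (hS : IsShield G S) (bs₀ : Fin k → V)
    (hF : ∀ p, ∃ r, ForcesIn G S r bs₀ p) : BodyguardsWin G k := by
  have hmove : ∀ bs p, ∃ bs', TeamStep G bs bs' ∧
      (S bs p → Surrounds G bs' p ∧ ∀ p', stepRel G p p' → S bs' p') ∧
      (¬ S bs p → ∀ r, ForcesIn G S (r + 1) bs p →
        ∀ p', stepRel G p p' → ForcesIn G S r bs' p') := fun bs p => by
    by_cases h : S bs p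
    · obtain ⟨bs', hstep, hbs'⟩ := hS h
      exact ⟨bs', hstep, fun _ => hbs', absurd h⟩
    · obtain ⟨bs', hstep, hbs'⟩ := exists_teamStep_forcesIn h
      exact ⟨bs', hstep, fun h' => absurd h' h, fun _ => hbs'⟩
  choose bmove hstep hshield hforce using hmove
  refine ⟨bs₀, bmove, hstep, fun pinit pmove hp => ?_⟩
  set g := gamePlay bs₀ bmove pinit pmove
  have hstay : ∀ t, S (g t).1 (g t).2 → S (g (t + 1)).1 (g (t + 1)).2 :=
    fun t h => (hshield _ _ h).2 _ (hp _ _)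
  have hreach : ∀ r t, ForcesIn G S r (g t).1 (g t).2 → ∃ N, S (g N).1 (g N).2 := by
    intro r
    induction r with
    | zero => rintro t ⟨h⟩; exact ⟨t, h⟩
    | succ r ih =>
      intro t h
      by_cases ht : S (g t).1 (g t).2
      · exact ⟨t, ht⟩
      · exact ih (t + 1) (hforce _ _ ht r h _ (hp _ _))
  obtain ⟨r, hr⟩ := hF (pinit bs₀)
  obtain ⟨N, hN⟩ := hreach r 0 hr
  have hsafe : ∀ t, N ≤ t → S (g t).1 (g t).2 := fun t ht =>
    Nat.le_induction (P := fun t _ => S (g t).1 (g t).2) hN (fun t _ => hstay t) t ht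
  exact ⟨N, fun t ht => (hshield _ _ (hsafe t ht)).1⟩

/-- The positions in `Q` have the team to move. -/
theorem not_bodyguardsWin_of_evasion (Q : (Fin k → V) → V → Prop) (hinit : ∀ bs, ∃ p, Q bs p)
    (hQ : ∀ bs bs' p, Q bs p → TeamStep G bs bs' →
      ¬ Surrounds G bs' p ∧ ∃ p', stepRel G p p' ∧ Q bs' p') :
    ¬ BodyguardsWin G k := by
  rintro ⟨binit, bmove, hb, hwin⟩
  have hmove : ∀ bs' p, ∃ p', stepRel G p p' ∧
      ((∃ bs, Q bs p ∧ TeamStep G bs bs') → Q bs' p') := fun bs' p => by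
    by_cases h : ∃ bs, Q bs p ∧ TeamStep G bs bs'
    · obtain ⟨bs, hbs, hstep⟩ := h
      obtain ⟨-, p', hp, hp'⟩ := hQ _ _ _ hbs hstep
      exact ⟨p', hp, fun _ => hp'⟩
    · exact ⟨p, .refl p, fun h' => absurd h' h⟩
  choose pinit hpinit using hinit
  choose pmove hpstep hpmove using hmove
  set g := gamePlay binit bmove pinit pmove
  have hinv : ∀ t, Q (g t).1 (g t).2 := by
    intro t
    induction t with
    | zero => exact hpinit _
    | succ t ih => exact hpmove _ _ ⟨_, ih, hb _ _⟩
  obtain ⟨N, hN⟩ := hwin pinit pmove hpstep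
  exact (hQ _ _ _ (hinv N) (hb _ _)).1 (hN N le_rfl)

end Strategies

section Shadowing

variable {V : Type*} {G : SimpleGraph V} {k : ℕ}

/-- Some pursuer is within one step of the evader. -/
def Catches (G : SimpleGraph V) (cs : Fin k → V) (r : V) : Prop :=
  ∃ i, stepRel G (cs i) r

lemma exists_stepRel_dist_le (hG : G.Connected) {x y : V} {r : ℕ} (h : G.dist x y ≤ r + 1) :
    ∃ z, stepRel G x z ∧ G.dist z y ≤ r := by
  obtain ⟨w, hw⟩ := hG.exists_walk_length_eq_dist x y
  cases w with
  | nil => exact ⟨x, .refl x, by simp⟩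
  | cons hadj w =>
    rw [Walk.length_cons] at hw
    exact ⟨_, Or.inr hadj, (dist_le w).trans (by omega)⟩

lemma forcesIn_eq_of_dist_le (hG : G.Connected) {r : ℕ} {bs bs' : Fin k → V} {p : V}
    (h : ∀ i, G.dist (bs i) (bs' i) ≤ r) : ForcesIn G (fun cs _ => cs = bs') r bs p := by
  induction r generalizing bs p with
  | zero => exact .of_mem (funext fun i => hG.dist_eq_zero_iff.1 (Nat.le_zero.1 (h i)))
  | succ r ih =>
    choose cs hcs hdist using fun i => exists_stepRel_dist_le hG (h i)
    exact .move hcs fun _ _ => ih hdist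

/-- Distinct bodyguards are within one step of the shadows `tgt t p`, `t ∈ s`, of the president. -/
def Shadows {ι : Type*} (G : SimpleGraph V) (tgt : ι → V → V) (s : Set ι) (bs : Fin k → V) (p : V) :
    Prop :=
  ∃ f : ι → Fin k, s.InjOn f ∧ ∀ t ∈ s, stepRel G (bs (f t)) (tgt t p)

variable {ι : Type*} {tgt : ι → V → V}

lemma isShield_shadows (hstep : ∀ t x y, stepRel G x y → stepRel G (tgt t x) (tgt t y))
    (hcover : ∀ p v, G.Adj p v → ∃ t, tgt t p = v) :
    IsShield G (Shadows (k := k) G tgt Set.univ) := by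
  rintro bs p ⟨f, hf, hbs⟩
  have hinj : Function.Injective f := Set.injOn_univ.1 hf
  have hmove : ∀ i, ∃ v, stepRel G (bs i) v ∧ ∀ t, f t = i → v = tgt t p := fun i => by
    by_cases h : ∃ t, f t = i
    · obtain ⟨t, rfl⟩ := h
      exact ⟨tgt t p, hbs t trivial, fun u hu => by rw [hinj hu]⟩
    · exact ⟨bs i, .refl _, fun t ht => absurd ⟨t, ht⟩ h⟩
  choose bs' hbs' htgt using hmove
  refine ⟨bs', hbs', fun v hv => ?_, fun p' hp => ⟨f, hf, fun t _ => ?_⟩⟩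
  · obtain ⟨t, rfl⟩ := hcover p v hv
    exact ⟨f t, htgt _ t rfl⟩
  · rw [htgt _ t rfl]
    exact hstep t _ _ hp

/-- Bodyguards already shadowing keep doing so while the others, listed by `g`, play as cops against
the next shadow. -/
lemma exists_teamStep_of_disjoint {c : ℕ} {s : Set ι} {f : ι → Fin k} (hf : s.InjOn f)
    (g : Fin c ↪ Fin k) (hg : ∀ a, ∀ t ∈ s, f t ≠ g a) {bs : Fin k → V} {p : V}
    {cs' : Fin c → V} (hbs : ∀ t ∈ s, stepRel G (bs (f t)) (tgt t p))
    (hcs : TeamStep G (bs ∘ g) cs') :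
    ∃ bs', TeamStep G bs bs' ∧ bs' ∘ g = cs' ∧ ∀ t ∈ s, bs' (f t) = tgt t p := by
  have hmove : ∀ i, ∃ v, stepRel G (bs i) v ∧ (∀ a, g a = i → v = cs' a) ∧
      ∀ t ∈ s, f t = i → v = tgt t p := fun i => by
    by_cases hi : ∃ a, g a = i
    · obtain ⟨a, rfl⟩ := hi
      exact ⟨cs' a, hcs a, fun b hb => by rw [g.injective hb], fun t ht h => absurd h (hg a t ht)⟩
    by_cases hi' : ∃ t ∈ s, f t = i
    · obtain ⟨t, ht, rfl⟩ := hi'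
      exact ⟨tgt t p, hbs t ht, fun a ha => absurd ⟨a, ha⟩ hi,
        fun u hu h => by rw [hf hu ht h]⟩
    · exact ⟨bs i, .refl _, fun a ha => absurd ⟨a, ha⟩ hi,
        fun t ht h => absurd ⟨t, ht, h⟩ hi'⟩
  choose bs' hbs' hg' hf' using hmove
  exact ⟨bs', hbs', funext fun a => hg' _ a rfl, fun t ht => hf' _ t ht rfl⟩

lemma forcesIn_shadows_insert (hstep : ∀ t x y, stepRel G x y → stepRel G (tgt t x) (tgt t y))
    {c R : ℕ} {s : Set ι} {t₀ : ι} (ht₀ : t₀ ∉ s) {f : ι → Fin k} (hf : s.InjOn f)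
    (g : Fin c ↪ Fin k) (hg : ∀ a, ∀ t ∈ s, f t ≠ g a) {bs : Fin k → V} {p : V}
    (hbs : ∀ t ∈ s, stepRel G (bs (f t)) (tgt t p))
    (hcatch : ForcesIn G (Catches G) R (bs ∘ g) (tgt t₀ p)) :
    ForcesIn G (Shadows G tgt (insert t₀ s)) R bs p := by
  classical
  generalize hcs : bs ∘ g = cs, hr : tgt t₀ p = r at hcatch
  induction hcatch generalizing bs p with
  | of_mem h =>
    subst hcs hr
    obtain ⟨a, ha⟩ := h
    have hne : ∀ t ∈ s, t ≠ t₀ := fun t ht h => ht₀ (h ▸ ht)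
    have hupd : s.EqOn (Function.update f t₀ (g a)) f := fun t ht =>
      Function.update_of_ne (hne t ht) _ _
    refine .of_mem ⟨Function.update f t₀ (g a),
      (Set.injOn_insert ht₀).2 ⟨hf.congr hupd.symm, ?_⟩, ?_⟩
    · rintro ⟨t, ht, h⟩
      rw [hupd ht, Function.update_self] at h
      exact hg a t ht h
    · rintro t (rfl | ht)
      · rwa [Function.update_self]
      · rw [hupd ht]
        exact hbs t ht
  | move hcs' _ ih =>
    subst hcs hr
    obtain ⟨bs', hbs', hg', hf'⟩ := exists_teamStep_of_disjoint hf g hg hbs hcs'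
    refine .move hbs' fun p' hp => ih _ (hstep t₀ p p' hp) (fun t ht => ?_) hg' rfl
    rw [hf' t ht]
    exact hstep t _ _ hp

theorem forcesIn_shadows [Fintype ι] {c R : ℕ}
    (hstep : ∀ t x y, stepRel G x y → stepRel G (tgt t x) (tgt t y))
    (hcatch : ∀ (cs : Fin (c + 1) → V) r, ForcesIn G (Catches G) R cs r)
    (s : Finset ι) (bs : Fin (Fintype.card ι + c) → V) (p : V) :
    ForcesIn G (Shadows G tgt s) (s.card * R) bs p := by
  classical
  induction s using Finset.induction_on with
  | empty =>
    have hι : Nonempty (ι → Fin (Fintype.card ι + c)) :=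
      ⟨fun t => Fin.castAdd c (Fintype.equivFin ι t)⟩
    exact .of_mem ⟨hι.some, by simp, by simp⟩
  | insert t₀ s ht₀ ih =>
    rw [Finset.card_insert_of_notMem ht₀, Nat.succ_mul, Finset.coe_insert]
    refine ih.trans ?_
    rintro bs p ⟨f, hf, hbs⟩
    have hfree : Fintype.card (Fin (c + 1)) ≤ (s.image f)ᶜ.card := by
      have hs : s.card < Fintype.card ι := Finset.card_lt_univ_of_notMem ht₀
      have himage : (s.image f).card ≤ s.card := Finset.card_image_le
      rw [Finset.card_compl, Fintype.card_fin, Fintype.card_fin]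
      omega
    obtain ⟨g, hg⟩ := Function.Embedding.exists_of_card_le_finset hfree
    refine forcesIn_shadows_insert hstep ht₀ hf g (fun a t ht h => ?_) hbs (hcatch _ _)
    exact Finset.mem_compl.1 (hg ⟨a, rfl⟩) (h ▸ Finset.mem_image_of_mem f ht)

/-- Each image `tgt t p` of the president is chased by `c + 1` cops and then kept by one of them, so
that `c + 1` bodyguards are still free for the last chase. -/
theorem bodyguardsWin_of_shadows [Fintype ι] {c R : ℕ}
    (hstep : ∀ t x y, stepRel G x y → stepRel G (tgt t x) (tgt t y))
    (hcover : ∀ p v, G.Adj p v → ∃ t, tgt t p = v)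
    (hcatch : ∀ (cs : Fin (c + 1) → V) r, ForcesIn G (Catches G) R cs r) [Nonempty V] :
    BodyguardsWin G (Fintype.card ι + c) :=
  bodyguardsWin_of_forcesIn (isShield_shadows hstep hcover) (fun _ => Classical.arbitrary V)
    fun p => ⟨_, Finset.coe_univ (α := ι) ▸ forcesIn_shadows hstep hcatch Finset.univ _ p⟩

end Shadowing

section Threats

variable {V : Type*} {k : ℕ} {G : SimpleGraph V} {bs : Fin k → V} {p q : V}

lemma Surrounds.range_eq (h : Surrounds G bs p) (hk : k ≤ (G.neighborSet p).ncard) :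
    Set.range bs = G.neighborSet p := by
  have hcard : (Set.range bs).ncard ≤ k := by
    simpa [Set.image_univ] using Set.ncard_image_le (f := bs) (s := Set.univ)
  exact (Set.eq_of_subset_of_ncard_le h (hcard.trans hk) (Set.finite_range bs)).symm

lemma Surrounds.injective (h : Surrounds G bs p) (hk : k ≤ (G.neighborSet p).ncard) :
    Function.Injective bs := by
  have hcard : Nat.card (Fin k) ≤ Nat.card (Set.range bs) := by
    rwa [Nat.card_fin, h.range_eq hk]
  exact (Function.Surjective.bijective_of_nat_card_le (Set.rangeFactorization_surjective) hcard).1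
    |> (Subtype.val_injective.comp ·)

lemma Surrounds.adj (h : Surrounds G bs p) (hk : k ≤ (G.neighborSet p).ncard) (i : Fin k) :
    G.Adj p (bs i) := by
  rw [← mem_neighborSet, ← h.range_eq hk]
  exact ⟨i, rfl⟩

lemma not_surrounds_of_adj (hp : Surrounds G bs p) (hk : k ≤ (G.neighborSet q).ncard)
    (h : G.Adj p q) : ¬ Surrounds G bs q := fun hq => by
  obtain ⟨i, rfl⟩ := hp q h
  exact G.irrefl (hq.adj hk i)

/-- The team at `bs` can surround `q` in one move. -/
def Threatens (G : SimpleGraph V) (bs : Fin k → V) (q : V) : Prop :=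
  ∃ bs', TeamStep G bs bs' ∧ Surrounds G bs' q

end Threats

section Grid

variable {n m : ℕ}

/-- The `n × m` grid. -/
abbrev grid (n m : ℕ) : SimpleGraph (Fin n × Fin m) := pathGraph n □ pathGraph m

/-- The `ℓ¹`-distance of two grid vertices. -/
def gridDist (x y : Fin n × Fin m) : ℕ := Nat.dist x.1 y.1 + Nat.dist x.2 y.2

lemma gridDist_comm (x y : Fin n × Fin m) : gridDist x y = gridDist y x := by
  simp only [gridDist, Nat.dist_comm]

lemma gridDist_triangle (x y z : Fin n × Fin m) : gridDist x z ≤ gridDist x y + gridDist y z := by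
  have h₁ := Nat.dist.triangle_inequality x.1 y.1 z.1
  have h₂ := Nat.dist.triangle_inequality x.2 y.2 z.2
  unfold gridDist
  omega

lemma gridDist_le_iff {x y : Fin n × Fin m} {d : ℕ} :
    gridDist x y ≤ d ↔ (x.1 + x.2 : ℕ) ≤ y.1 + y.2 + d ∧ (x.1 + y.2 : ℕ) ≤ y.1 + x.2 + d ∧
      (y.1 + x.2 : ℕ) ≤ x.1 + y.2 + d ∧ (y.1 + y.2 : ℕ) ≤ x.1 + x.2 + d := by
  simp only [gridDist, Nat.dist]
  omega

lemma grid_adj_iff {x y : Fin n × Fin m} : (grid n m).Adj x y ↔ gridDist x y = 1 := by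
  simp only [boxProd_adj, pathGraph_adj, Fin.ext_iff, gridDist, Nat.dist]
  omega

lemma grid_adj_iff_val {x y : Fin n × Fin m} : (grid n m).Adj x y ↔
    ((x.1 + 1 : ℕ) = y.1 ∨ (y.1 + 1 : ℕ) = x.1) ∧ (x.2 : ℕ) = y.2 ∨
      ((x.2 + 1 : ℕ) = y.2 ∨ (y.2 + 1 : ℕ) = x.2) ∧ (x.1 : ℕ) = y.1 := by
  simp only [boxProd_adj, pathGraph_adj, Fin.ext_iff]

lemma grid_stepRel_iff {x y : Fin n × Fin m} : stepRel (grid n m) x y ↔ gridDist x y ≤ 1 := by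
  rw [stepRel, grid_adj_iff, Prod.ext_iff, Fin.ext_iff, Fin.ext_iff, gridDist, Nat.dist, Nat.dist]
  omega

lemma grid_connected [NeZero n] [NeZero m] : (grid n m).Connected :=
  have : Nonempty (Fin n) := ⟨0⟩
  have : Nonempty (Fin m) := ⟨0⟩
  .boxProd ⟨pathGraph_preconnected n⟩ ⟨pathGraph_preconnected m⟩

section TwoCops

variable {a b r r' : Fin n × Fin m} {t μ : ℕ}

/-- The cop `a` is straight below the robber `r`, the cop `b` straight to the left of him. -/
structure CopsAligned (a b r : Fin n × Fin m) : Prop where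
  fst_eq : a.1 = r.1
  snd_le : a.2 ≤ r.2
  snd_eq : b.2 = r.2
  fst_le : b.1 ≤ r.1

lemma CopsAligned.exists_advance (h : CopsAligned a b r) (hr : stepRel (grid n m) r r')
    (hfree : ¬ Catches (grid n m) ![a, b] r') :
    ∃ a' b', stepRel (grid n m) a a' ∧ stepRel (grid n m) b b' ∧ CopsAligned a' b' r' ∧
      (a.2 + b.1 : ℕ) < a'.2 + b'.1 := by
  obtain ⟨h₁, h₂, h₃, h₄⟩ := h
  simp only [Catches, Fin.exists_fin_two, Matrix.cons_val_zero, Matrix.cons_val_one,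
    grid_stepRel_iff, not_or, gridDist_le_iff] at hr hfree ⊢
  by_cases hcol : r'.1 = r.1
  · refine ⟨(a.1, ⟨a.2 + 1, by omega⟩), (b.1, r'.2), ?_, ?_, ⟨?_, ?_, ?_, ?_⟩, ?_⟩ <;>
      simp only [Fin.le_def] <;> omega
  · refine ⟨(r'.1, a.2), (⟨b.1 + 1, by omega⟩, b.2), ?_, ?_, ⟨?_, ?_, ?_, ?_⟩, ?_⟩ <;>
      simp only [Fin.le_def] <;> omega

lemma CopsAligned.forcesIn_catches (h : CopsAligned a b r) (hμ : n + m ≤ a.2 + b.1 + μ)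
    (hr : stepRel (grid n m) r r') : ForcesIn (grid n m) (Catches (grid n m)) μ ![a, b] r' := by
  induction μ generalizing a b r r' with
  | zero => omega
  | succ μ ih =>
    by_cases hcatch : Catches (grid n m) ![a, b] r'
    · exact .of_mem hcatch
    obtain ⟨a', b', ha, hb, h', hlt⟩ := h.exists_advance hr hcatch
    exact .move (bs' := ![a', b']) (Fin.forall_fin_two.2 ⟨ha, hb⟩) fun _ => ih h' (by omega)

/-- The situation after both cops have walked for `t` rounds, starting at the origin: `a` along the
bottom side towards the column of the robber, `b` along the left side towards his row, and each of
them staying in that column or row once there. -/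
structure CopsClosing (t : ℕ) (a b r : Fin n × Fin m) : Prop where
  fst_le : a.1 ≤ r.1
  min_le_fst : min t r.1 ≤ a.1
  snd_eq_zero : (a.2 : ℕ) = 0
  snd_le : b.2 ≤ r.2
  min_le_snd : min t r.2 ≤ b.2
  fst_eq_zero : (b.1 : ℕ) = 0

lemma CopsClosing.exists_advance (h : CopsClosing t a b r) (hr : stepRel (grid n m) r r') :
    ∃ a' b', stepRel (grid n m) a a' ∧ stepRel (grid n m) b b' ∧ CopsClosing (t + 1) a' b' r' := by
  obtain ⟨h₁, h₂, h₃, h₄, h₅, h₆⟩ := h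
  simp only [grid_stepRel_iff, gridDist_le_iff] at hr ⊢
  refine ⟨(⟨min (a.1 + 1) r'.1, by omega⟩, a.2), (b.1, ⟨min (b.2 + 1) r'.2, by omega⟩),
    ?_, ?_, ⟨?_, ?_, h₃, ?_, ?_, h₆⟩⟩ <;> simp only [Fin.le_def] <;> omega

lemma CopsClosing.aligned (h : CopsClosing t a b r) (hn : n ≤ t) (hm : m ≤ t) :
    CopsAligned a b r := by
  obtain ⟨h₁, h₂, h₃, h₄, h₅, h₆⟩ := h
  constructor <;> omega

lemma CopsClosing.forcesIn_catches (h : CopsClosing t a b r) (hn : n ≤ t + μ) (hm : m ≤ t + μ)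
    (hr : stepRel (grid n m) r r') :
    ForcesIn (grid n m) (Catches (grid n m)) (n + m + μ) ![a, b] r' := by
  induction μ generalizing t a b r r' with
  | zero => exact (h.aligned hn hm).forcesIn_catches (by omega) hr
  | succ μ ih =>
    obtain ⟨a', b', ha, hb, h'⟩ := h.exists_advance hr
    exact .move (bs' := ![a', b']) (Fin.forall_fin_two.2 ⟨ha, hb⟩) fun _ =>
      ih h' (by omega) (by omega)

theorem exists_forcesIn_catches_grid [NeZero n] [NeZero m] :
    ∃ R, ∀ (cs : Fin 2 → Fin n × Fin m) r, ForcesIn (grid n m) (Catches (grid n m)) R cs r := by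
  have hdiam : (grid n m).ediam ≠ ⊤ := connected_iff_ediam_ne_top.1 grid_connected
  refine ⟨(grid n m).diam + (n + m + (n + m)), fun cs r => ?_⟩
  have hcorner := forcesIn_eq_of_dist_le (p := r) grid_connected
    fun i => dist_le_diam hdiam (u := cs i) (v := ![(0, 0), (0, 0)] i)
  refine hcorner.trans ?_
  rintro _ r rfl
  have hclosing : CopsClosing 0 ((0, 0) : Fin n × Fin m) (0, 0) r := by constructor <;> simp
  exact hclosing.forcesIn_catches (by omega) (by omega) (.refl r)

end TwoCops

/-- The neighbours of a vertex in the four directions, clamped to the grid so that they are defined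
and nonexpansive everywhere. -/
def gridShadow (t : Fin 4) (p : Fin n × Fin m) : Fin n × Fin m :=
  match t with
  | 0 => (⟨min (p.1 + 1) (n - 1), by omega⟩, p.2)
  | 1 => (⟨p.1 - 1, by omega⟩, p.2)
  | 2 => (p.1, ⟨min (p.2 + 1) (m - 1), by omega⟩)
  | 3 => (p.1, ⟨p.2 - 1, by omega⟩)

lemma stepRel_gridShadow (t : Fin 4) (x y : Fin n × Fin m) (h : stepRel (grid n m) x y) :
    stepRel (grid n m) (gridShadow t x) (gridShadow t y) := by
  simp only [grid_stepRel_iff, gridDist_le_iff] at h ⊢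
  fin_cases t <;> simp only [gridShadow] <;> omega

lemma exists_gridShadow_eq (p v : Fin n × Fin m) (h : (grid n m).Adj p v) :
    ∃ t, gridShadow t p = v := by
  have hv₁ := v.1.isLt
  have hv₂ := v.2.isLt
  obtain ⟨h | h, h'⟩ | ⟨h | h, h'⟩ := grid_adj_iff_val.1 h
  · exact ⟨0, Prod.ext (Fin.ext (by simp only [gridShadow]; omega)) (Fin.ext h')⟩
  · exact ⟨1, Prod.ext (Fin.ext (by simp only [gridShadow]; omega)) (Fin.ext h')⟩
  · exact ⟨2, Prod.ext (Fin.ext h') (Fin.ext (by simp only [gridShadow]; omega))⟩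
  · exact ⟨3, Prod.ext (Fin.ext h') (Fin.ext (by simp only [gridShadow]; omega))⟩

theorem bodyguardsWin_grid_five [NeZero n] [NeZero m] : BodyguardsWin (grid n m) 5 := by
  obtain ⟨R, hcatch⟩ := exists_forcesIn_catches_grid (n := n) (m := m)
  exact bodyguardsWin_of_shadows stepRel_gridShadow exists_gridShadow_eq hcatch

/-- A vertex of the grid that is not on the boundary. -/
structure GridInterior (p : Fin n × Fin m) : Prop where
  fst_pos : 0 < (p.1 : ℕ)
  fst_lt : p.1 + 1 < n
  snd_pos : 0 < (p.2 : ℕ)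
  snd_lt : p.2 + 1 < m

lemma GridInterior.four_le_ncard_neighborSet {p : Fin n × Fin m} (hp : GridInterior p) :
    4 ≤ ((grid n m).neighborSet p).ncard := by
  obtain ⟨h₁, h₂, h₃, h₄⟩ := hp
  have hinj : Function.Injective fun t => gridShadow t p := fun s t h => by
    have hfst := congrArg (fun x => (x.1 : ℕ)) h
    have hsnd := congrArg (fun x => (x.2 : ℕ)) h
    fin_cases s <;> fin_cases t <;> first | rfl | (simp only [gridShadow] at hfst hsnd; omega)
  have hsub : Set.range (fun t => gridShadow t p) ⊆ (grid n m).neighborSet p := by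
    rintro _ ⟨t, rfl⟩
    simp only [mem_neighborSet, grid_adj_iff, gridDist, Nat.dist]
    fin_cases t <;> simp only [gridShadow] <;> omega
  have hcard := Set.ncard_le_ncard hsub
  rwa [Set.ncard_range_of_injective hinj, Nat.card_fin] at hcard

/-- `q` is the midpoint of `p` and `t`, so that each of these is the reflection of the other through
`q`. -/
structure IsGridMidpoint (p q t : Fin n × Fin m) : Prop where
  fst : (p.1 + t.1 : ℕ) = 2 * q.1
  snd : (p.2 + t.2 : ℕ) = 2 * q.2

lemma IsGridMidpoint.adj {p q t : Fin n × Fin m} (ht : IsGridMidpoint p q t)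
    (h : (grid n m).Adj p q) : (grid n m).Adj q t := by
  obtain ⟨h₁, h₂⟩ := ht
  rw [grid_adj_iff_val] at h ⊢
  omega

lemma GridInterior.exists_isGridMidpoint {p q : Fin n × Fin m} (hq : GridInterior q)
    (h : (grid n m).Adj p q) : ∃ t, IsGridMidpoint p q t := by
  obtain ⟨h₁, h₂, h₃, h₄⟩ := hq
  rw [grid_adj_iff_val] at h
  exact ⟨(⟨2 * q.1 - p.1, by omega⟩, ⟨2 * q.2 - p.2, by omega⟩),
    ⟨by dsimp only; omega, by dsimp only; omega⟩⟩

/-- `q₁` and `q₂` are neighbours of `p`, one in its row and one in its column. -/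
structure GridCorner (p q₁ q₂ : Fin n × Fin m) : Prop where
  adj_left : (grid n m).Adj p q₁
  adj_right : (grid n m).Adj p q₂
  fst_ne : q₁.1 ≠ q₂.1
  snd_ne : q₁.2 ≠ q₂.2

lemma exists_pathGraph_adj_interior (hn : 4 ≤ n) {i : Fin n} (hi : 0 < (i : ℕ))
    (hin : i + 1 < n) : ∃ j : Fin n, (pathGraph n).Adj i j ∧ 0 < (j : ℕ) ∧ j + 1 < n := by
  simp only [pathGraph_adj]
  by_cases h : (i : ℕ) = 1
  · exact ⟨⟨2, by omega⟩, .inl (by dsimp only; omega), two_pos, by dsimp only; omega⟩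
  · exact ⟨⟨i - 1, by omega⟩, .inr (by dsimp only; omega), by dsimp only; omega,
      by dsimp only; omega⟩

section Corner

variable {p q₁ q₂ v w g u t : Fin n × Fin m}

lemma GridCorner.symm (h : GridCorner p q₁ q₂) : GridCorner p q₂ q₁ :=
  ⟨h.adj_right, h.adj_left, h.fst_ne.symm, h.snd_ne.symm⟩

lemma GridInterior.exists_gridCorner (hn : 4 ≤ n) (hm : 4 ≤ m) (hp : GridInterior p) :
    ∃ q₁ q₂, GridCorner p q₁ q₂ ∧ GridInterior q₁ ∧ GridInterior q₂ := by
  obtain ⟨h₁, h₂, h₃, h₄⟩ := hp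
  obtain ⟨x, hx, hx₁, hx₂⟩ := exists_pathGraph_adj_interior hn h₁ h₂
  obtain ⟨y, hy, hy₁, hy₂⟩ := exists_pathGraph_adj_interior hm h₃ h₄
  exact ⟨(x, p.2), (p.1, y),
    ⟨boxProd_adj.2 (.inl ⟨hx, rfl⟩), boxProd_adj.2 (.inr ⟨hy, rfl⟩), hx.ne', hy.ne⟩,
    ⟨hx₁, hx₂, h₃, h₄⟩, ⟨h₁, h₂, hy₁, hy₂⟩⟩

lemma GridCorner.eq_or_isGridMidpoint (h : GridCorner p q₁ q₂) (hv : (grid n m).Adj p v) :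
    v = q₁ ∨ v = q₂ ∨ IsGridMidpoint q₁ p v ∨ IsGridMidpoint q₂ p v := by
  obtain ⟨h₁, h₂, h₃, h₄⟩ := h
  have hmid : ∀ q, IsGridMidpoint q p v ↔ (q.1 + v.1 : ℕ) = 2 * p.1 ∧ (q.2 + v.2 : ℕ) = 2 * p.2 :=
    fun q => ⟨fun h => ⟨h.1, h.2⟩, fun h => ⟨h.1, h.2⟩⟩
  simp only [grid_adj_iff_val, Prod.ext_iff, Fin.ext_iff, hmid, ne_eq] at *
  rcases h₁ with ⟨h₁ | h₁, h₁'⟩ | ⟨h₁ | h₁, h₁'⟩ <;> omega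

lemma GridCorner.eq_left_of_gridDist_le (h : GridCorner p q₁ q₂) (ht : IsGridMidpoint p q₁ t)
    (hgt : gridDist g t ≤ 1) (hgp : gridDist g p ≤ 2) (hgq : gridDist g q₂ ≤ 2) : g = q₁ := by
  obtain ⟨h₁, h₂, h₃, h₄⟩ := h
  obtain ⟨ht₁, ht₂⟩ := ht
  simp only [grid_adj_iff_val, gridDist_le_iff, Prod.ext_iff, Fin.ext_iff, ne_eq] at *
  rcases h₁ with ⟨h₁ | h₁, h₁'⟩ | ⟨h₁ | h₁, h₁'⟩ <;> omega

lemma IsGridMidpoint.eq_of_gridDist_le (hw : IsGridMidpoint q₁ p w) (hpq : (grid n m).Adj p q₁)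
    (hu : (grid n m).Adj q₁ u) (hwu : gridDist w u ≤ 2) : u = p := by
  obtain ⟨hw₁, hw₂⟩ := hw
  simp only [grid_adj_iff_val, gridDist_le_iff, Prod.ext_iff, Fin.ext_iff] at *
  omega

lemma GridCorner.eq_of_gridDist_le (h : GridCorner p q₁ q₂) (hw : IsGridMidpoint q₂ p w)
    (hgw : gridDist g w ≤ 1) (hgp : gridDist g p ≤ 1) (hu : (grid n m).Adj q₁ u) (hup : u ≠ p)
    (hgu : gridDist g u ≤ 1) : g = w := by
  obtain ⟨h₁, h₂, h₃, h₄⟩ := h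
  obtain ⟨hw₁, hw₂⟩ := hw
  simp only [grid_adj_iff_val, gridDist_le_iff, Prod.ext_iff, Fin.ext_iff, ne_eq] at *
  rcases h₁ with ⟨h₁ | h₁, h₁'⟩ | ⟨h₁ | h₁, h₁'⟩ <;> omega

end Corner

section Evasion

variable {k : ℕ} {bs : Fin k → Fin n × Fin m} {p q q₁ q₂ w : Fin n × Fin m}

lemma Threatens.gridDist_le (h : Threatens (grid n m) bs q)
    (hk : k ≤ ((grid n m).neighborSet q).ncard) (i : Fin k) : gridDist (bs i) q ≤ 2 := by
  obtain ⟨bs', hstep, hbs'⟩ := h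
  have hi : gridDist (bs i) (bs' i) ≤ 1 := grid_stepRel_iff.1 (hstep i)
  have hq : gridDist (bs' i) q ≤ 1 := grid_stepRel_iff.1 (.inr (hbs'.adj hk i).symm)
  exact (gridDist_triangle _ (bs' i) _).trans (Nat.add_le_add hi hq)

/-- The three vertices of a corner lie in the interior and are all threatened by the team. -/
structure ThreatenedCorner (bs : Fin k → Fin n × Fin m) (p q₁ q₂ : Fin n × Fin m) : Prop where
  corner : GridCorner p q₁ q₂
  interior : GridInterior p
  interior_left : GridInterior q₁
  interior_right : GridInterior q₂
  threatens : Threatens (grid n m) bs p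
  threatens_left : Threatens (grid n m) bs q₁
  threatens_right : Threatens (grid n m) bs q₂

lemma ThreatenedCorner.symm (h : ThreatenedCorner bs p q₁ q₂) : ThreatenedCorner bs p q₂ q₁ :=
  ⟨h.corner.symm, h.interior, h.interior_right, h.interior_left, h.threatens, h.threatens_right,
    h.threatens_left⟩

lemma ThreatenedCorner.exists_eq_left (h : ThreatenedCorner bs p q₁ q₂) (hk : k ≤ 4) :
    ∃ i, bs i = q₁ := by
  obtain ⟨t, ht⟩ := h.interior_left.exists_isGridMidpoint h.corner.adj_left
  obtain ⟨bs₁, hstep, hbs₁⟩ := h.threatens_left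
  obtain ⟨i, rfl⟩ := hbs₁ t (ht.adj h.corner.adj_left)
  exact ⟨i, h.corner.eq_left_of_gridDist_le ht (grid_stepRel_iff.1 (hstep i))
    (h.threatens.gridDist_le (hk.trans h.interior.four_le_ncard_neighborSet) i)
    (h.threatens_right.gridDist_le (hk.trans h.interior_right.four_le_ncard_neighborSet) i)⟩

lemma IsGridMidpoint.eq_of_teamStep {bs₀ bs₁ : Fin k → Fin n × Fin m} {i : Fin k}
    (hw : IsGridMidpoint q p (bs₀ i)) (hpq : (grid n m).Adj p q)
    (hk : k ≤ ((grid n m).neighborSet q).ncard) (hstep₀ : TeamStep (grid n m) bs bs₀)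
    (hstep₁ : TeamStep (grid n m) bs bs₁) (hbs₁ : Surrounds (grid n m) bs₁ q) : bs₁ i = p := by
  refine hw.eq_of_gridDist_le hpq (hbs₁.adj hk i) ((gridDist_triangle _ (bs i) _).trans ?_)
  rw [gridDist_comm]
  exact Nat.add_le_add (grid_stepRel_iff.1 (hstep₀ i)) (grid_stepRel_iff.1 (hstep₁ i))

/-- The guard sent to `w` when `p` is to be surrounded must go to `p` when `q₂` is, but cannot go to
`p` when `q₁` is, since that is the task of another guard. -/
lemma ThreatenedCorner.exists_eq_of_isGridMidpoint (h : ThreatenedCorner bs p q₁ q₂) (hk : k ≤ 4)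
    (hw : IsGridMidpoint q₂ p w) : ∃ i, bs i = w := by
  have hk₁ := hk.trans h.interior_left.four_le_ncard_neighborSet
  have hk₂ := hk.trans h.interior_right.four_le_ncard_neighborSet
  obtain ⟨hpq₁, hpq₂, hfst, -⟩ := h.corner
  obtain ⟨bs₀, hstep₀, hbs₀⟩ := h.threatens
  obtain ⟨bs₁, hstep₁, hbs₁⟩ := h.threatens_left
  obtain ⟨bs₂, hstep₂, hbs₂⟩ := h.threatens_right
  obtain ⟨w₁, hw₁⟩ := h.interior.exists_isGridMidpoint hpq₁.symm
  obtain ⟨i, rfl⟩ := hbs₀ w (hw.adj hpq₂.symm)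
  obtain ⟨j, rfl⟩ := hbs₀ w₁ (hw₁.adj hpq₁.symm)
  have hj : bs₁ j = p := hw₁.eq_of_teamStep hpq₁ hk₁ hstep₀ hstep₁ hbs₁
  have hi : bs₂ i = p := hw.eq_of_teamStep hpq₂ hk₂ hstep₀ hstep₂ hbs₂
  have hij : i ≠ j := by
    rintro rfl
    have h₁ := hw.fst
    have h₂ := hw₁.fst
    exact hfst (Fin.ext (by omega))
  have hi' : bs₁ i ≠ p := fun h => hij ((hbs₁.injective hk₁) (h.trans hj.symm))
  exact ⟨i, h.corner.eq_of_gridDist_le hw (grid_stepRel_iff.1 (hstep₀ i))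
    (grid_stepRel_iff.1 (hi ▸ hstep₂ i)) (hbs₁.adj hk₁ i) hi' (grid_stepRel_iff.1 (hstep₁ i))⟩

theorem ThreatenedCorner.surrounds (h : ThreatenedCorner bs p q₁ q₂) (hk : k ≤ 4) :
    Surrounds (grid n m) bs p := fun v hv => by
  obtain rfl | rfl | hv | hv := h.corner.eq_or_isGridMidpoint hv
  · exact h.exists_eq_left hk
  · exact h.symm.exists_eq_left hk
  · exact h.symm.exists_eq_of_isGridMidpoint hk hv
  · exact h.exists_eq_of_isGridMidpoint hk hv

lemma exists_not_threatens (hn : 4 ≤ n) (hm : 4 ≤ m) (hk : k ≤ 4) (hp : GridInterior p)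
    (hbs : ¬ Surrounds (grid n m) bs p) :
    ∃ q, stepRel (grid n m) p q ∧ GridInterior q ∧ ¬ Threatens (grid n m) bs q := by
  obtain ⟨q₁, q₂, hc, hq₁, hq₂⟩ := hp.exists_gridCorner hn hm
  by_contra! h
  exact hbs (ThreatenedCorner.surrounds ⟨hc, hp, hq₁, hq₂, h p (.refl p) hp,
    h q₁ (.inr hc.adj_left) hq₁, h q₂ (.inr hc.adj_right) hq₂⟩ hk)

theorem not_bodyguardsWin_grid (hn : 4 ≤ n) (hm : 4 ≤ m) (hk : k ≤ 4) :
    ¬ BodyguardsWin (grid n m) k := by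
  refine not_bodyguardsWin_of_evasion
    (fun bs p => GridInterior p ∧ ¬ Threatens (grid n m) bs p) (fun bs => ?_) ?_
  · have hp : GridInterior ((⟨1, by omega⟩, ⟨1, by omega⟩) : Fin n × Fin m) := by
      constructor <;> dsimp only <;> omega
    obtain ⟨q, _, hc, hq, -⟩ := hp.exists_gridCorner hn hm
    obtain ⟨r, hr, hbs⟩ : ∃ r, GridInterior r ∧ ¬ Surrounds (grid n m) bs r := by
      by_contra! h
      exact not_surrounds_of_adj (h _ hp) (hk.trans hq.four_le_ncard_neighborSet) hc.adj_left
        (h q hq)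
    obtain ⟨p', -, hp'⟩ := exists_not_threatens hn hm hk hr hbs
    exact ⟨p', hp'⟩
  · rintro bs bs' p ⟨hp, hbs⟩ hstep
    have hbs' : ¬ Surrounds (grid n m) bs' p := fun h => hbs ⟨bs', hstep, h⟩
    exact ⟨hbs', exists_not_threatens hn hm hk hp hbs'⟩

end Evasion

end Grid

theorem bodyguardNumber_grid_general (n m : ℕ) (hn : 4 ≤ n) (hm : 4 ≤ m) :
    bodyguardNumber (SimpleGraph.pathGraph n □ SimpleGraph.pathGraph m) = 5 := by
  have : NeZero n := ⟨by omega⟩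
  have : NeZero m := ⟨by omega⟩
  refine le_antisymm (Nat.sInf_le bodyguardsWin_grid_five)
    (le_csInf ⟨5, bodyguardsWin_grid_five⟩ fun k hk => ?_)
  by_contra! h
  exact not_bodyguardsWin_grid hn hm (Nat.le_of_lt_succ h) hk

/-- For `m ≥ n ≥ 4`, `B(P_n □ P_m) = 5`. -/
theorem bodyguardNumber_grid (n m : ℕ) (hn : 4 ≤ n) (hm : n ≤ m) :
    bodyguardNumber (SimpleGraph.pathGraph n □ SimpleGraph.pathGraph m) = 5 :=
  bodyguardNumber_grid_general n m hn (hn.trans hm)
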